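/- arXiv:1304.6746 — 2 statements merged into one kernel-verified Lean document; each statement's English description precedes it below -/
import Mathlib

section
/- Let k₁, k₂ > 0 be integers and k = k₁ + k₂. If f(x₁,…,x_k) = x₁² + ··· + x_{k₁}² − x_{k₁+1}² − ··· − x_k², then W_f = W_{f,I} stochastically dominates (1/4)·χ²₁, i.e., W_f ≥_st (1/4)·χ²₁. -/
open MeasureTheory ProbabilityTheory Matrix MvPolynomial Real

noncomputable section

/-- The distribution of a vector of independent standard normal random variables. -/
def stdGaussian (ι : Type*) [Fintype ι] : Measure (ι → ℝ) :=
  Measure.pi fun _ => gaussianReal 0 1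

/-- `μ` is the distribution of a centered Gaussian random vector with covariance matrix `S`,
i.e. `μ` is the law of `A Z` for a vector `Z` of i.i.d. standard normals with `A Aᵀ = S`. -/
def IsCenteredGaussian {ι : Type*} [Fintype ι] (μ : Measure (ι → ℝ))
    (S : Matrix ι ι ℝ) : Prop :=
  ∃ A : Matrix ι ι ℝ, A * Aᵀ = S ∧ μ = (stdGaussian ι).map A.mulVec

/-- The gradient of a polynomial. -/
def polyGrad {ι : Type*} [Fintype ι] (f : MvPolynomial ι ℝ) (x : ι → ℝ) : ι → ℝ :=
  fun i => eval x (pderiv i f)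

/-- The Wald ratio `W_{f,S}(x) = f(x)² / (∇f(x)ᵀ S ∇f(x))`. -/
def waldRV {ι : Type*} [Fintype ι] (f : MvPolynomial ι ℝ) (S : Matrix ι ι ℝ)
    (x : ι → ℝ) : ℝ :=
  (eval x f) ^ 2 / (polyGrad f x ⬝ᵥ S.mulVec (polyGrad f x))

/-- The chi-square distribution with `k` degrees of freedom. -/
def chiSq (k : ℕ) : Measure ℝ :=
  (stdGaussian (Fin k)).map fun z => ∑ i, (z i) ^ 2

/-!
Let `A` and `B` be the sums of the positive and of the negative squares, with `m + 1` and `n + 1`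
terms respectively, so that `W = (A - B) ^ 2 / (4 * (A + B))`. Then `(A, B)` has the law of
`(x ^ 2, y ^ 2)` when the planar standard Gaussian is reweighted by a multiple of
`|x| ^ m * |y| ^ n`. Angle doubling `z ↦ z ^ 2 / |z|` preserves the unweighted Gaussian, and the
first coordinate of `(v, w) = z ^ 2 / |z|` satisfies `v ^ 2 / 4 = W`. So `W` has the law of
`v ^ 2 / 4` under a Gaussian `(v, w)` reweighted by `|x| ^ m * |y| ^ n` expressed in `(v, w)`.
For fixed `w` both `max |x| |y|` and `|x| * |y| = √(v ^ 2 + w ^ 2) * |w| / 2` increase with `|v|`,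
hence so does the weight symmetrised under `v ↦ -v`, and by Chebyshev's correlation inequality the
reweighting can only increase the probability that `v ^ 2 / 4 > t`.
-/

open scoped ENNReal

section Correlation

lemma measure_mul_lintegral_le_setLIntegral {α : Type*} [MeasurableSpace α] (μ : Measure α)
    [IsProbabilityMeasure μ] {S : Set α} (hS : MeasurableSet S) {G : α → ℝ≥0∞}
    (h : ∀ a ∈ S, ∀ b ∉ S, G b ≤ G a) :
    μ S * ∫⁻ a, G a ∂μ ≤ ∫⁻ a in S, G a ∂μ := by
  set M := ⨆ b ∈ Sᶜ, G b
  have hcompl : ∫⁻ a in Sᶜ, G a ∂μ ≤ M * μ Sᶜ := by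
    rw [← setLIntegral_const]
    exact setLIntegral_mono' hS.compl fun b hb => le_iSup₂_of_le b hb le_rfl
  have hset : M * μ S ≤ ∫⁻ a in S, G a ∂μ := by
    rw [← setLIntegral_const]
    exact setLIntegral_mono' hS fun a ha => iSup₂_le fun b hb => h a ha b hb
  calc μ S * ∫⁻ a, G a ∂μ
      = μ S * ∫⁻ a in S, G a ∂μ + μ S * ∫⁻ a in Sᶜ, G a ∂μ := by
        rw [← lintegral_add_compl G hS, mul_add]
    _ ≤ μ S * ∫⁻ a in S, G a ∂μ + μ S * (M * μ Sᶜ) := by gcongr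
    _ = μ S * ∫⁻ a in S, G a ∂μ + μ Sᶜ * (M * μ S) := by ring
    _ ≤ μ S * ∫⁻ a in S, G a ∂μ + μ Sᶜ * ∫⁻ a in S, G a ∂μ := by gcongr
    _ = ∫⁻ a in S, G a ∂μ := by rw [← add_mul, prob_add_prob_compl hS, one_mul]

lemma setLIntegral_add_comp_neg {α : Type*} [InvolutiveNeg α] [MeasurableSpace α]
    [MeasurableNeg α] (μ : Measure α) [μ.IsNegInvariant] {S : Set α} (hS : MeasurableSet S)
    (hS_neg : -S = S) {G : α → ℝ≥0∞} (hG : Measurable G) :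
    ∫⁻ a in S, (G a + G (-a)) ∂μ = 2 * ∫⁻ a in S, G a ∂μ := by
  have hneg : ∫⁻ a in S, G (-a) ∂μ = ∫⁻ a in S, G a ∂μ := by
    conv_lhs => rw [← hS_neg]
    exact (Measure.measurePreserving_neg μ).setLIntegral_comp_preimage hS hG
  rw [lintegral_add_left hG, hneg, two_mul]

lemma measure_mul_lintegral_le_setLIntegral_of_neg {α : Type*} [InvolutiveNeg α]
    [MeasurableSpace α] [MeasurableNeg α] (μ : Measure α) [IsProbabilityMeasure μ]
    [μ.IsNegInvariant] {S : Set α} (hS : MeasurableSet S) (hS_neg : -S = S) {G : α → ℝ≥0∞}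
    (hG : Measurable G) (h : ∀ a ∈ S, ∀ b ∉ S, G b + G (-b) ≤ G a + G (-a)) :
    μ S * ∫⁻ a, G a ∂μ ≤ ∫⁻ a in S, G a ∂μ := by
  have hsymm := measure_mul_lintegral_le_setLIntegral μ hS h
  have huniv := setLIntegral_add_comp_neg μ MeasurableSet.univ Set.neg_univ hG
  rw [Measure.restrict_univ] at huniv
  rw [setLIntegral_add_comp_neg μ hS hS_neg hG, huniv, mul_left_comm] at hsymm
  exact (ENNReal.mul_le_mul_iff_right two_ne_zero ENNReal.ofNat_ne_top).1 hsymm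

end Correlation

section Lebesgue

lemma map_withDensity_comp_of_measurePreserving {α β : Type*} [MeasurableSpace α]
    [MeasurableSpace β] {μ : Measure α} {ν : Measure β} {f : α → β} (hf : MeasurePreserving f μ ν)
    {g : β → ℝ≥0∞} (hg : Measurable g) : (μ.withDensity (g ∘ f)).map f = ν.withDensity g := by
  ext s hs
  rw [Measure.map_apply hf.measurable hs, withDensity_apply _ (hf.measurable hs),
    withDensity_apply _ hs]
  exact hf.setLIntegral_comp_preimage hs hg

lemma lintegral_eq_two_mul_setLIntegral_Ioi {f : ℝ → ℝ≥0∞} (hf : Measurable f)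
    (hf_even : f.Even) : ∫⁻ x, f x = 2 * ∫⁻ x in Set.Ioi 0, f x := by
  have hneg : ∫⁻ x in Set.Iio 0, f x = ∫⁻ x in Set.Ioi 0, f x := by
    have h := (Measure.measurePreserving_neg (volume : Measure ℝ)).setLIntegral_comp_preimage
      (measurableSet_Ioi (a := 0)) hf
    simpa [hf_even _] using h
  rw [← lintegral_add_compl f measurableSet_Ioi, Set.compl_Ioi,
    ← setLIntegral_congr Iio_ae_eq_Iic, hneg, two_mul]

lemma setLIntegral_Ioc_comp_intCast_mul {T : ℝ} (hT : 0 < T) {g : ℝ → ℝ≥0∞} (hg : Measurable g)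
    (hgT : Function.Periodic g T) {n : ℤ} (hn : n ≠ 0) (a : ℝ) :
    ∫⁻ θ in Set.Ioc a (a + T), g (n * θ) = ∫⁻ θ in Set.Ioc a (a + T), g θ := by
  have : Fact (0 < T) := ⟨hT⟩
  have hlift : Measurable hgT.lift := QuotientAddGroup.measurable_from_quotient.2 hg
  calc ∫⁻ θ in Set.Ioc a (a + T), g (n * θ)
      = ∫⁻ θ in Set.Ioc a (a + T), hgT.lift (n • (θ : AddCircle T)) :=
        lintegral_congr fun θ => by
          rw [← AddCircle.coe_zsmul, zsmul_eq_mul, hgT.lift_coe]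
    _ = ∫⁻ x : AddCircle T, hgT.lift (n • x) :=
        AddCircle.lintegral_preimage T a fun x => hgT.lift (n • x)
    _ = ∫⁻ x : AddCircle T, hgT.lift x :=
        (MeasureTheory.Measure.measurePreserving_zsmul volume hn).lintegral_comp hlift
    _ = ∫⁻ θ in Set.Ioc a (a + T), hgT.lift θ := (AddCircle.lintegral_preimage T a _).symm
    _ = ∫⁻ θ in Set.Ioc a (a + T), g θ := by simp only [hgT.lift_coe]

end Lebesgue

section PlanarGaussian

instance (v : NNReal) : (gaussianReal 0 v).IsNegInvariant :=
  ⟨by rw [Measure.neg, gaussianReal_map_neg, neg_zero]⟩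

lemma gaussianPDF_mul_gaussianPDF (v : NNReal) (x y : ℝ) :
    gaussianPDF 0 v x * gaussianPDF 0 v y =
      gaussianPDF 0 v 0 * gaussianPDF 0 v (√(x ^ 2 + y ^ 2)) := by
  have hexp : Real.exp (-x ^ 2 / (2 * v)) * Real.exp (-y ^ 2 / (2 * v)) =
      Real.exp (-0 ^ 2 / (2 * v)) * Real.exp (-√(x ^ 2 + y ^ 2) ^ 2 / (2 * v)) := by
    rw [← Real.exp_add, ← Real.exp_add, Real.sq_sqrt (by positivity)]
    ring_nf
  simp only [gaussianPDF]
  rw [← ENNReal.ofReal_mul (gaussianPDFReal_nonneg _ _ _),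
    ← ENNReal.ofReal_mul (gaussianPDFReal_nonneg _ _ _)]
  simp only [gaussianPDFReal, sub_zero]
  congr 1
  linear_combination (√(2 * π * v))⁻¹ ^ 2 * hexp

lemma lintegral_gaussianReal_prod_polar {v : NNReal} (hv : v ≠ 0) {F : ℝ × ℝ → ℝ≥0∞}
    (hF : Measurable F) :
    ∫⁻ p, F p ∂((gaussianReal 0 v).prod (gaussianReal 0 v)) =
      gaussianPDF 0 v 0 * ∫⁻ r in Set.Ioi 0, ENNReal.ofReal r * gaussianPDF 0 v r *
        ∫⁻ θ in Set.Ioo (-π) π, F (r * Real.cos θ, r * Real.sin θ) := by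
  have hpdf : ∀ r ∈ Set.Ioi (0 : ℝ), ∀ θ, gaussianPDF 0 v (r * Real.cos θ) *
      gaussianPDF 0 v (r * Real.sin θ) = gaussianPDF 0 v 0 * gaussianPDF 0 v r := by
    intro r hr θ
    rw [gaussianPDF_mul_gaussianPDF, mul_pow, mul_pow, ← mul_add, Real.cos_sq_add_sin_sq, mul_one,
      Real.sqrt_sq (le_of_lt hr)]
  rw [gaussianReal_of_var_ne_zero _ hv, prod_withDensity (by fun_prop) (by fun_prop),
    lintegral_withDensity_eq_lintegral_mul _ (by fun_prop) hF, ← Measure.volume_eq_prod,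
    ← lintegral_comp_polarCoord_symm]
  simp only [polarCoord_target, polarCoord_symm_apply, smul_eq_mul, Pi.mul_apply]
  rw [Measure.volume_eq_prod, ← Measure.prod_restrict, lintegral_prod _ (by fun_prop),
    ← lintegral_const_mul _ (by fun_prop)]
  refine setLIntegral_congr_fun measurableSet_Ioi fun r hr => ?_
  simp only [hpdf r hr]
  rw [← lintegral_const_mul _ (by fun_prop), ← lintegral_const_mul _ (by fun_prop)]
  exact lintegral_congr fun θ => by ring

/-- The map `(r cos θ, r sin θ) ↦ (r cos 2θ, r sin 2θ)`, i.e. `z ↦ z² / |z|` on `ℂ = ℝ²`; the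
origin is sent to itself because `0 / 0 = 0`. -/
def angleDouble (p : ℝ × ℝ) : ℝ × ℝ :=
  ((p.1 ^ 2 - p.2 ^ 2) / √(p.1 ^ 2 + p.2 ^ 2), 2 * p.1 * p.2 / √(p.1 ^ 2 + p.2 ^ 2))

lemma measurable_angleDouble : Measurable angleDouble := by
  unfold angleDouble
  fun_prop

lemma angleDouble_polar {r : ℝ} (hr : 0 ≤ r) (θ : ℝ) :
    angleDouble (r * Real.cos θ, r * Real.sin θ) =
      (r * Real.cos (2 * θ), r * Real.sin (2 * θ)) := by
  have hnorm : (r * Real.cos θ) ^ 2 + (r * Real.sin θ) ^ 2 = r ^ 2 := by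
    rw [mul_pow, mul_pow, ← mul_add, Real.cos_sq_add_sin_sq, mul_one]
  rcases hr.eq_or_lt with rfl | hr
  · simp [angleDouble]
  · simp only [angleDouble, hnorm, Real.sqrt_sq hr.le, Real.cos_two_mul', Real.sin_two_mul]
    ext <;> field_simp

lemma measurePreserving_angleDouble {v : NNReal} (hv : v ≠ 0) :
    MeasurePreserving angleDouble ((gaussianReal 0 v).prod (gaussianReal 0 v))
      ((gaussianReal 0 v).prod (gaussianReal 0 v)) := by
  refine ⟨measurable_angleDouble, Measure.ext_of_lintegral _ fun F hF => ?_⟩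
  rw [lintegral_map hF measurable_angleDouble,
    lintegral_gaussianReal_prod_polar hv (F := fun p => F (angleDouble p))
      (hF.comp measurable_angleDouble),
    lintegral_gaussianReal_prod_polar hv hF]
  congr 1
  refine setLIntegral_congr_fun measurableSet_Ioi fun r hr => congrArg _ ?_
  have hperiodic : Function.Periodic (fun θ => F (r * Real.cos θ, r * Real.sin θ)) (2 * π) :=
    fun θ => by simp only [Real.cos_add_two_pi, Real.sin_add_two_pi]
  have hdouble := setLIntegral_Ioc_comp_intCast_mul Real.two_pi_pos (by fun_prop) hperiodic
    two_ne_zero (-π)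
  rw [show -π + 2 * π = π by ring, ← restrict_Ioo_eq_restrict_Ioc] at hdouble
  simpa only [angleDouble_polar (le_of_lt hr), Int.cast_ofNat] using hdouble

lemma angleDouble_fst_sq (p : ℝ × ℝ) :
    (angleDouble p).1 ^ 2 = (p.1 ^ 2 - p.2 ^ 2) ^ 2 / (p.1 ^ 2 + p.2 ^ 2) := by
  rw [angleDouble, div_pow, Real.sq_sqrt (by positivity)]

end PlanarGaussian

section HalfAngle

/-- The common value of `|x|` at the preimages `(x, y)` of `(v, w)` under `angleDouble`, i.e.
`r |cos (θ / 2)|` for `(v, w) = (r cos θ, r sin θ)`; the common value of `|y|` is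
`halfAngleAbs (-v) w`. -/
def halfAngleAbs (v w : ℝ) : ℝ :=
  √(√(v ^ 2 + w ^ 2) * (√(v ^ 2 + w ^ 2) + v) / 2)

lemma halfAngleAbs_nonneg (v w : ℝ) : 0 ≤ halfAngleAbs v w := Real.sqrt_nonneg _

@[fun_prop]
lemma measurable_halfAngleAbs : Measurable fun p : ℝ × ℝ => halfAngleAbs p.1 p.2 := by
  unfold halfAngleAbs
  fun_prop

lemma halfAngleAbs_angleDouble (p : ℝ × ℝ) :
    halfAngleAbs (angleDouble p).1 (angleDouble p).2 = |p.1| := by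
  obtain ⟨x, y⟩ := p
  obtain ⟨r, hr, hr_sq⟩ : ∃ r, 0 ≤ r ∧ r ^ 2 = x ^ 2 + y ^ 2 :=
    ⟨√(x ^ 2 + y ^ 2), Real.sqrt_nonneg _, Real.sq_sqrt (by positivity)⟩
  simp only [halfAngleAbs, angleDouble, ← hr_sq, Real.sqrt_sq hr]
  rcases hr.eq_or_lt with rfl | hr_pos
  · have hx : x = 0 := by nlinarith [sq_nonneg x, sq_nonneg y]
    simp [hx]
  · have hnorm : ((x ^ 2 - y ^ 2) / r) ^ 2 + (2 * x * y / r) ^ 2 = r ^ 2 := by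
      field_simp
      linear_combination (-r ^ 2 - x ^ 2 - y ^ 2) * hr_sq
    have hsq : r * (r + (x ^ 2 - y ^ 2) / r) / 2 = x ^ 2 := by
      field_simp
      linear_combination hr_sq
    rw [hnorm, Real.sqrt_sq hr, hsq, Real.sqrt_sq_eq_abs]

lemma angleDouble_swap (p : ℝ × ℝ) :
    angleDouble p.swap = (-(angleDouble p).1, (angleDouble p).2) := by
  simp only [angleDouble, Prod.fst_swap, Prod.snd_swap, add_comm (p.2 ^ 2), Prod.mk.injEq]
  constructor <;> ring

lemma halfAngleAbs_neg_angleDouble (p : ℝ × ℝ) :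
    halfAngleAbs (-(angleDouble p).1) (angleDouble p).2 = |p.2| := by
  simpa only [angleDouble_swap, Prod.fst_swap] using halfAngleAbs_angleDouble p.swap

lemma halfAngleAbs_mul_halfAngleAbs_neg (v w : ℝ) :
    halfAngleAbs v w * halfAngleAbs (-v) w = √(v ^ 2 + w ^ 2) * |w| / 2 := by
  have hr_sq : √(v ^ 2 + w ^ 2) ^ 2 = v ^ 2 + w ^ 2 := Real.sq_sqrt (by positivity)
  have hv : |v| ≤ √(v ^ 2 + w ^ 2) := Real.abs_le_sqrt (le_add_of_nonneg_right (sq_nonneg w))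
  rw [halfAngleAbs, halfAngleAbs, neg_sq]
  set r := √(v ^ 2 + w ^ 2)
  have : 0 ≤ r := Real.sqrt_nonneg _
  have hrv : 0 ≤ r + v := by linarith [neg_le_of_abs_le hv]
  have hsq : r * (r + v) / 2 * (r * (r + -v) / 2) = (r * |w| / 2) ^ 2 := by
    rw [div_pow, mul_pow, sq_abs]
    linear_combination r ^ 2 / 4 * hr_sq
  rw [← Real.sqrt_mul (by positivity), hsq, Real.sqrt_sq (by positivity)]

lemma halfAngleAbs_neg_le {v : ℝ} (hv : 0 ≤ v) (w : ℝ) :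
    halfAngleAbs (-v) w ≤ halfAngleAbs v w := by
  unfold halfAngleAbs
  rw [neg_sq]
  gcongr
  linarith

lemma halfAngleAbs_le_halfAngleAbs {v v' : ℝ} (hv : 0 ≤ v) (hvv' : v ≤ v') (w : ℝ) :
    halfAngleAbs v w ≤ halfAngleAbs v' w := by
  unfold halfAngleAbs
  gcongr

lemma halfAngleAbs_mul_le_halfAngleAbs_mul {v v' : ℝ} (hv : 0 ≤ v) (hvv' : v ≤ v') (w : ℝ) :
    halfAngleAbs v w * halfAngleAbs (-v) w ≤ halfAngleAbs v' w * halfAngleAbs (-v') w := by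
  rw [halfAngleAbs_mul_halfAngleAbs_neg, halfAngleAbs_mul_halfAngleAbs_neg]
  gcongr

lemma add_le_add_of_le_of_mul_le_mul {a b a' b' : ℝ} (hb' : 0 ≤ b') (hba : b ≤ a) (haa' : a ≤ a')
    (h : a * b ≤ a' * b') : a + b ≤ a' + b' := by
  by_contra! hlt
  have ha' : 0 < a' := by linarith
  have hab : 0 ≤ (a' - a) * (a' - b) :=
    mul_nonneg (sub_nonneg.2 haa') (sub_nonneg.2 (hba.trans haa'))
  nlinarith [mul_pos ha' (sub_pos.2 hlt)]

lemma halfAngleAbs_pow_add_le {v v' : ℝ} (hv : 0 ≤ v) (hvv' : v ≤ v') (w : ℝ) (d : ℕ) :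
    halfAngleAbs v w ^ d + halfAngleAbs (-v) w ^ d ≤
      halfAngleAbs v' w ^ d + halfAngleAbs (-v') w ^ d := by
  have hnonneg := halfAngleAbs_nonneg
  refine add_le_add_of_le_of_mul_le_mul (pow_nonneg (hnonneg _ _) d)
    (pow_le_pow_left₀ (hnonneg _ _) (halfAngleAbs_neg_le hv w) d)
    (pow_le_pow_left₀ (hnonneg _ _) (halfAngleAbs_le_halfAngleAbs hv hvv' w) d) ?_
  rw [← mul_pow, ← mul_pow]
  exact pow_le_pow_left₀ (mul_nonneg (hnonneg _ _) (hnonneg _ _))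
    (halfAngleAbs_mul_le_halfAngleAbs_mul hv hvv' w) d

/-- The weight `|x| ^ m * |y| ^ n` as a function of `(v, w) = angleDouble (x, y)`. -/
def halfAngleWeight (m n : ℕ) (v w : ℝ) : ℝ :=
  halfAngleAbs v w ^ m * halfAngleAbs (-v) w ^ n

lemma halfAngleWeight_nonneg (m n : ℕ) (v w : ℝ) : 0 ≤ halfAngleWeight m n v w :=
  mul_nonneg (pow_nonneg (halfAngleAbs_nonneg _ _) _) (pow_nonneg (halfAngleAbs_nonneg _ _) _)

@[fun_prop]
lemma measurable_halfAngleWeight (m n : ℕ) :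
    Measurable fun p : ℝ × ℝ => halfAngleWeight m n p.1 p.2 := by
  unfold halfAngleWeight
  have : Measurable fun p : ℝ × ℝ => halfAngleAbs (-p.1) p.2 :=
    measurable_halfAngleAbs.comp (by fun_prop : Measurable fun p : ℝ × ℝ => (-p.1, p.2))
  fun_prop

lemma halfAngleWeight_angleDouble (m n : ℕ) (p : ℝ × ℝ) :
    halfAngleWeight m n (angleDouble p).1 (angleDouble p).2 = |p.1| ^ m * |p.2| ^ n := by
  rw [halfAngleWeight, halfAngleAbs_angleDouble, halfAngleAbs_neg_angleDouble]

lemma halfAngleWeight_neg (m n : ℕ) (v w : ℝ) :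
    halfAngleWeight m n (-v) w = halfAngleWeight n m v w := by
  rw [halfAngleWeight, halfAngleWeight, neg_neg, mul_comm]

lemma halfAngleWeight_add_swap_le {v v' : ℝ} (hv : 0 ≤ v) (hvv' : v ≤ v') (w : ℝ) (m n : ℕ) :
    halfAngleWeight m n v w + halfAngleWeight n m v w ≤
      halfAngleWeight m n v' w + halfAngleWeight n m v' w := by
  wlog hmn : m ≤ n generalizing m n
  · simpa only [add_comm] using this n m (le_of_not_ge hmn)
  obtain ⟨d, rfl⟩ := Nat.exists_eq_add_of_le hmn
  have hfactor (u : ℝ) : halfAngleWeight m (m + d) u w + halfAngleWeight (m + d) m u w =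
      (halfAngleAbs u w * halfAngleAbs (-u) w) ^ m *
        (halfAngleAbs u w ^ d + halfAngleAbs (-u) w ^ d) := by
    unfold halfAngleWeight
    ring
  have hnonneg := halfAngleAbs_nonneg
  rw [hfactor, hfactor]
  have hprod (u : ℝ) : 0 ≤ halfAngleAbs u w * halfAngleAbs (-u) w :=
    mul_nonneg (hnonneg _ _) (hnonneg _ _)
  exact mul_le_mul
    (pow_le_pow_left₀ (hprod v) (halfAngleAbs_mul_le_halfAngleAbs_mul hv hvv' w) m)
    (halfAngleAbs_pow_add_le hv hvv' w d)
    (add_nonneg (pow_nonneg (hnonneg _ _) d) (pow_nonneg (hnonneg _ _) d))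
    (pow_nonneg (hprod v') m)

lemma halfAngleWeight_add_neg_le {v v' : ℝ} (hvv' : |v| ≤ |v'|) (w : ℝ) (m n : ℕ) :
    halfAngleWeight m n v w + halfAngleWeight m n (-v) w ≤
      halfAngleWeight m n v' w + halfAngleWeight m n (-v') w := by
  have habs (u : ℝ) : halfAngleWeight m n u w + halfAngleWeight m n (-u) w =
      halfAngleWeight m n |u| w + halfAngleWeight n m |u| w := by
    rcases abs_choice u with hu | hu <;> rw [hu]
    · rw [halfAngleWeight_neg]
    · rw [← halfAngleWeight_neg m n (-u), neg_neg, add_comm]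
  rw [habs, habs]
  exact halfAngleWeight_add_swap_le (abs_nonneg v) hvv' w m n

lemma measure_mul_lintegral_halfAngleWeight_le (m n : ℕ) (μ ν : Measure ℝ) [IsProbabilityMeasure μ]
    [μ.IsNegInvariant] [SFinite ν] {S : Set ℝ} (hS : MeasurableSet S) (hS_neg : -S = S)
    (hS_abs : ∀ v ∈ S, ∀ v' ∉ S, |v'| ≤ |v|) :
    μ S * ∫⁻ p, ENNReal.ofReal (halfAngleWeight m n p.1 p.2) ∂(μ.prod ν) ≤
      ∫⁻ p in S ×ˢ Set.univ, ENNReal.ofReal (halfAngleWeight m n p.1 p.2) ∂(μ.prod ν) := by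
  rw [← Measure.prod_restrict, Measure.restrict_univ, lintegral_prod_symm _ (by fun_prop),
    lintegral_prod_symm _ (by fun_prop), ← lintegral_const_mul _ (by fun_prop)]
  refine lintegral_mono fun w => measure_mul_lintegral_le_setLIntegral_of_neg _ hS hS_neg
    (by fun_prop) fun v hv v' hv' => ?_
  simp only [← ENNReal.ofReal_add (halfAngleWeight_nonneg _ _ _ _) (halfAngleWeight_nonneg _ _ _ _)]
  exact ENNReal.ofReal_le_ofReal (halfAngleWeight_add_neg_le (hS_abs v hv v' hv') w m n)

end HalfAngle

section ChiSquare

lemma measurePreserving_finAppend {α : Type*} [MeasurableSpace α] (μ : Measure α) [SigmaFinite μ]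
    (m n : ℕ) :
    MeasurePreserving (fun p : (Fin m → α) × (Fin n → α) => Fin.append p.1 p.2)
      ((Measure.pi fun _ => μ).prod (Measure.pi fun _ => μ)) (Measure.pi fun _ => μ) := by
  have hmeas : Measurable fun p : (Fin m → α) × (Fin n → α) => Fin.append p.1 p.2 := by
    refine measurable_pi_lambda _ fun i => ?_
    induction i using Fin.addCases with
    | left i => simp only [Fin.append_left]; fun_prop
    | right i => simp only [Fin.append_right]; fun_prop
  refine ⟨hmeas, (Measure.pi_eq fun s hs => ?_).symm⟩
  have hpre : (fun p : (Fin m → α) × (Fin n → α) => Fin.append p.1 p.2) ⁻¹' Set.univ.pi s =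
      Set.univ.pi (fun i => s (Fin.castAdd n i)) ×ˢ Set.univ.pi (fun i => s (Fin.natAdd m i)) := by
    ext p
    simp [Set.mem_pi, Fin.forall_fin_add]
  rw [Measure.map_apply hmeas (MeasurableSet.univ_pi hs), hpre, Measure.prod_prod, Measure.pi_pi,
    Measure.pi_pi, Fin.prod_univ_add]

instance (ι : Type*) [Fintype ι] : IsProbabilityMeasure (stdGaussian ι) :=
  inferInstanceAs (IsProbabilityMeasure (Measure.pi _))

instance (k : ℕ) : IsProbabilityMeasure (chiSq k) :=
  Measure.isProbabilityMeasure_map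
    (by fun_prop : Measurable fun z : Fin k → ℝ => ∑ i, z i ^ 2).aemeasurable

lemma map_stdGaussian_sum_sq_castAdd_natAdd (m n : ℕ) :
    (stdGaussian (Fin (m + n))).map
        (fun z => (∑ i, z (Fin.castAdd n i) ^ 2, ∑ i, z (Fin.natAdd m i) ^ 2)) =
      (chiSq m).prod (chiSq n) := by
  have happend := measurePreserving_finAppend (gaussianReal 0 1) m n
  rw [chiSq, chiSq, Measure.map_prod_map _ _ (by fun_prop) (by fun_prop),
    _root_.stdGaussian, ← happend.map_eq, Measure.map_map (by fun_prop) happend.measurable]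
  congr 1
  ext p <;> simp

lemma chiSq_add (m n : ℕ) : chiSq (m + n) = (chiSq m).conv (chiSq n) := by
  rw [Measure.conv, ← map_stdGaussian_sum_sq_castAdd_natAdd,
    Measure.map_map (by fun_prop) (by fun_prop), chiSq]
  congr 1
  ext z
  exact Fin.sum_univ_add _

lemma chiSq_one : chiSq 1 = (gaussianReal 0 1).map (· ^ 2) := by
  rw [← (measurePreserving_funUnique (gaussianReal 0 1) (Fin 1)).map_eq,
    Measure.map_map (by fun_prop) (by fun_prop), chiSq]
  congr 1
  ext z
  exact Fin.sum_univ_one _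

/-- The measure `|x| ^ n dγ(x)` for the standard Gaussian `γ`. Up to normalisation, its image under
squaring is the chi-square law with `n + 1` degrees of freedom. -/
def absPowGaussian (n : ℕ) : Measure ℝ :=
  (gaussianReal 0 1).withDensity fun x => ENNReal.ofReal (|x| ^ n)

instance (n : ℕ) : SFinite (absPowGaussian n) := by
  unfold absPowGaussian
  infer_instance

lemma absPowGaussian_zero : absPowGaussian 0 = gaussianReal 0 1 := by
  simp only [absPowGaussian, pow_zero, ENNReal.ofReal_one, withDensity_const, one_smul]

lemma absPowGaussian_prod (m n : ℕ) :
    (absPowGaussian m).prod (absPowGaussian n) =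
      ((gaussianReal 0 1).prod (gaussianReal 0 1)).withDensity fun p =>
        ENNReal.ofReal (|p.1| ^ m * |p.2| ^ n) := by
  rw [absPowGaussian, absPowGaussian, prod_withDensity (by fun_prop) (by fun_prop)]
  simp only [ENNReal.ofReal_mul (pow_nonneg (abs_nonneg _) _)]

lemma lintegral_absPowGaussian_of_even (n : ℕ) {F : ℝ → ℝ≥0∞} (hF : Measurable F)
    (hF_even : F.Even) :
    ∫⁻ x, F x ∂absPowGaussian n =
      2 * ∫⁻ r in Set.Ioi 0, ENNReal.ofReal (r ^ n) * gaussianPDF 0 1 r * F r := by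
  have heven : Function.Even fun x => gaussianPDF 0 1 x * (ENNReal.ofReal (|x| ^ n) * F x) :=
    fun x => by simp only [gaussianPDF, gaussianPDFReal, sub_zero, neg_sq, abs_neg, hF_even x]
  rw [absPowGaussian, lintegral_withDensity_eq_lintegral_mul _ (by fun_prop) hF,
    gaussianReal_of_var_ne_zero _ one_ne_zero,
    lintegral_withDensity_eq_lintegral_mul _ (by fun_prop) (by fun_prop)]
  simp only [Pi.mul_apply]
  rw [lintegral_eq_two_mul_setLIntegral_Ioi (by fun_prop) heven]
  congr 1
  refine setLIntegral_congr_fun measurableSet_Ioi fun r hr => ?_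
  simp only [abs_of_pos (Set.mem_Ioi.1 hr)]
  ring

lemma lintegral_absPowGaussian_prod_sq_add_sq (m n : ℕ) {F : ℝ → ℝ≥0∞} (hF : Measurable F) :
    ∫⁻ p, F (p.1 ^ 2 + p.2 ^ 2) ∂((absPowGaussian m).prod (absPowGaussian n)) =
      gaussianPDF 0 1 0 *
        (∫⁻ θ in Set.Ioo (-π) π, ENNReal.ofReal (|Real.cos θ| ^ m * |Real.sin θ| ^ n)) *
          ∫⁻ r in Set.Ioi 0, ENNReal.ofReal (r ^ (m + n + 1)) * gaussianPDF 0 1 r * F (r ^ 2) := by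
  rw [absPowGaussian_prod, lintegral_withDensity_eq_lintegral_mul _ (by fun_prop) (by fun_prop),
    lintegral_gaussianReal_prod_polar one_ne_zero (by fun_prop), mul_assoc]
  congr 1
  rw [← lintegral_const_mul _ (by fun_prop)]
  refine setLIntegral_congr_fun measurableSet_Ioi fun r (hr : 0 < r) => ?_
  have hpolar (θ : ℝ) : ENNReal.ofReal (|r * Real.cos θ| ^ m * |r * Real.sin θ| ^ n) *
      F ((r * Real.cos θ) ^ 2 + (r * Real.sin θ) ^ 2) =
        ENNReal.ofReal (r ^ (m + n)) * F (r ^ 2) *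
          ENNReal.ofReal (|Real.cos θ| ^ m * |Real.sin θ| ^ n) := by
    have hsq : (r * Real.cos θ) ^ 2 + (r * Real.sin θ) ^ 2 = r ^ 2 := by
      rw [mul_pow, mul_pow, ← mul_add, Real.cos_sq_add_sin_sq, mul_one]
    have hweight : |r * Real.cos θ| ^ m * |r * Real.sin θ| ^ n =
        r ^ (m + n) * (|Real.cos θ| ^ m * |Real.sin θ| ^ n) := by
      rw [abs_mul, abs_mul, abs_of_pos hr]
      ring
    rw [hsq, hweight, ENNReal.ofReal_mul (by positivity)]
    ring
  simp only [Pi.mul_apply, hpolar]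
  rw [lintegral_const_mul _ (by fun_prop), pow_succ r (m + n), ENNReal.ofReal_mul (by positivity)]
  ring

lemma exists_map_absPowGaussian_prod_eq_smul (m n : ℕ) : ∃ c : ℝ≥0∞,
    ((absPowGaussian m).prod (absPowGaussian n)).map (fun p => p.1 ^ 2 + p.2 ^ 2) =
      c • (absPowGaussian (m + n + 1)).map (· ^ 2) := by
  refine ⟨gaussianPDF 0 1 0 * (∫⁻ θ in Set.Ioo (-π) π,
    ENNReal.ofReal (|Real.cos θ| ^ m * |Real.sin θ| ^ n)) * 2⁻¹,
    Measure.ext_of_lintegral _ fun F hF => ?_⟩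
  rw [lintegral_map hF (by fun_prop), lintegral_absPowGaussian_prod_sq_add_sq m n hF,
    lintegral_smul_measure, lintegral_map hF (by fun_prop),
    lintegral_absPowGaussian_of_even _ (by fun_prop) fun x => by rw [neg_sq], smul_eq_mul,
    mul_assoc _ 2⁻¹, ← mul_assoc 2⁻¹, ENNReal.inv_mul_cancel two_ne_zero ENNReal.ofNat_ne_top,
    one_mul]

lemma exists_chiSq_succ_eq_smul (n : ℕ) :
    ∃ c : ℝ≥0∞, chiSq (n + 1) = c • (absPowGaussian n).map (· ^ 2) := by
  induction n with
  | zero => exact ⟨1, by rw [chiSq_one, absPowGaussian_zero, one_smul]⟩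
  | succ n ih =>
    obtain ⟨c, hc⟩ := ih
    obtain ⟨d, hd⟩ := exists_map_absPowGaussian_prod_eq_smul n 0
    refine ⟨c * d, ?_⟩
    rw [chiSq_add, hc, chiSq_one, ← absPowGaussian_zero, Measure.conv, Measure.prod_smul_left,
      Measure.map_smul, Measure.map_prod_map _ _ (by fun_prop) (by fun_prop),
      Measure.map_map (by fun_prop) (by fun_prop), mul_smul]
    exact congrArg _ hd

end ChiSquare

section WaldRatio

lemma measurable_waldRV {ι : Type*} [Fintype ι] (f : MvPolynomial ι ℝ) (S : Matrix ι ι ℝ) :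
    Measurable (waldRV f S) := by
  have heval (g : MvPolynomial ι ℝ) : Measurable fun x => eval x g :=
    (MvPolynomial.continuous_eval g).measurable
  unfold waldRV polyGrad dotProduct mulVec dotProduct
  fun_prop

lemma polyGrad_sum_C_mul_X_sq {ι : Type*} [Fintype ι] (a x : ι → ℝ) (j : ι) :
    polyGrad (∑ i, C (a i) * X i ^ 2) x j = 2 * (a j * x j) := by
  classical
  rw [polyGrad, map_sum, map_sum, Finset.sum_eq_single j]
  · simp
    ring
  · intro i _ hij
    simp [pderiv_X_of_ne hij]
  · simp

lemma waldRV_sum_C_mul_X_sq {ι : Type*} [Fintype ι] [DecidableEq ι] (a x : ι → ℝ) :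
    waldRV (∑ i, C (a i) * X i ^ 2) 1 x =
      (∑ i, a i * x i ^ 2) ^ 2 / (4 * ∑ i, a i ^ 2 * x i ^ 2) := by
  rw [waldRV, one_mulVec, dotProduct, Finset.mul_sum]
  congr 1
  · simp only [map_sum, map_mul, map_pow, eval_C, eval_X]
  · refine Finset.sum_congr rfl fun i _ => ?_
    rw [polyGrad_sum_C_mul_X_sq]
    ring

/-- The quadratic form `x₁² + ⋯ + x_{k₁}² − x_{k₁+1}² − ⋯ − x_{k₁+k₂}²`. -/
def signatureForm (k₁ k₂ : ℕ) : MvPolynomial (Fin (k₁ + k₂)) ℝ :=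
  ∑ i : Fin (k₁ + k₂), C (if (i : ℕ) < k₁ then (1 : ℝ) else -1) * X i ^ 2

lemma waldRV_signatureForm (k₁ k₂ : ℕ) (x : Fin (k₁ + k₂) → ℝ) :
    waldRV (signatureForm k₁ k₂) 1 x =
      (∑ i, x (Fin.castAdd k₂ i) ^ 2 - ∑ i, x (Fin.natAdd k₁ i) ^ 2) ^ 2 /
        (4 * (∑ i, x (Fin.castAdd k₂ i) ^ 2 + ∑ i, x (Fin.natAdd k₁ i) ^ 2)) := by
  rw [signatureForm, waldRV_sum_C_mul_X_sq, Fin.sum_univ_add, Fin.sum_univ_add]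
  simp [sub_eq_add_neg]

lemma map_waldRV_signatureForm (k₁ k₂ : ℕ) :
    (stdGaussian (Fin (k₁ + k₂))).map (waldRV (signatureForm k₁ k₂) 1) =
      ((chiSq k₁).prod (chiSq k₂)).map fun q => (q.1 - q.2) ^ 2 / (4 * (q.1 + q.2)) := by
  rw [← map_stdGaussian_sum_sq_castAdd_natAdd, Measure.map_map (by fun_prop) (by fun_prop)]
  exact congrArg (fun f => Measure.map f _) (funext (waldRV_signatureForm k₁ k₂))

lemma map_absPowGaussian_prod_angleDouble (m n : ℕ) :
    ((absPowGaussian m).prod (absPowGaussian n)).map angleDouble =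
      ((gaussianReal 0 1).prod (gaussianReal 0 1)).withDensity fun p =>
        ENNReal.ofReal (halfAngleWeight m n p.1 p.2) := by
  have hmap := map_withDensity_comp_of_measurePreserving (measurePreserving_angleDouble one_ne_zero)
    (g := fun p => ENNReal.ofReal (halfAngleWeight m n p.1 p.2)) (by fun_prop)
  simpa only [absPowGaussian_prod, Function.comp_def, halfAngleWeight_angleDouble] using hmap

lemma exists_map_waldRV_signatureForm_eq_smul (m n : ℕ) : ∃ c : ℝ≥0∞,
    (stdGaussian (Fin (m + 1 + (n + 1)))).map (waldRV (signatureForm (m + 1) (n + 1)) 1) =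
      c • (((gaussianReal 0 1).prod (gaussianReal 0 1)).withDensity fun p =>
        ENNReal.ofReal (halfAngleWeight m n p.1 p.2)).map fun p => 1 / 4 * p.1 ^ 2 := by
  obtain ⟨a, ha⟩ := exists_chiSq_succ_eq_smul m
  obtain ⟨b, hb⟩ := exists_chiSq_succ_eq_smul n
  refine ⟨a * b, ?_⟩
  rw [map_waldRV_signatureForm, ha, hb, Measure.prod_smul_left, Measure.prod_smul_right,
    smul_smul, Measure.map_smul, Measure.map_prod_map _ _ (by fun_prop) (by fun_prop),
    Measure.map_map (by fun_prop) (by fun_prop), ← map_absPowGaussian_prod_angleDouble,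
    Measure.map_map (by fun_prop) measurable_angleDouble]
  congr 2
  ext p
  simp only [Function.comp_apply, Prod.map_fst, Prod.map_snd, angleDouble_fst_sq]
  rw [div_mul_div_comm, one_mul]

lemma exists_map_waldRV_signatureForm_apply (m n : ℕ) : ∃ c : ℝ≥0∞, ∀ B, MeasurableSet B →
    (stdGaussian (Fin (m + 1 + (n + 1)))).map (waldRV (signatureForm (m + 1) (n + 1)) 1) B =
      c * ∫⁻ p in (fun p => 1 / 4 * p.1 ^ 2) ⁻¹' B, ENNReal.ofReal (halfAngleWeight m n p.1 p.2)
        ∂((gaussianReal 0 1).prod (gaussianReal 0 1)) := by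
  obtain ⟨c, hc⟩ := exists_map_waldRV_signatureForm_eq_smul m n
  refine ⟨c, fun B hB => ?_⟩
  have hsq : Measurable fun p : ℝ × ℝ => 1 / 4 * p.1 ^ 2 := by fun_prop
  rw [hc, Measure.smul_apply, Measure.map_apply hsq hB, withDensity_apply _ (hsq hB), smul_eq_mul]

end WaldRatio

/-- Let `k₁, k₂ > 0` and `k = k₁ + k₂`.  If
`f(x) = x₁² + ⋯ + x_{k₁}² − x_{k₁+1}² − ⋯ − x_k²`, then `W_f = W_{f,I}` stochastically
dominates `(1/4)·χ²₁`. -/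
theorem waldRV_signature_lower_bound (k₁ k₂ : ℕ) (hk₁ : 0 < k₁) (hk₂ : 0 < k₂) :
    ∀ t : ℝ, ((chiSq 1).map (fun y => 1 / 4 * y)) (Set.Ioi t) ≤
      (stdGaussian (Fin (k₁ + k₂))).map
        (waldRV (∑ i : Fin (k₁ + k₂), C (if (i : ℕ) < k₁ then (1 : ℝ) else -1) * X i ^ 2)
          (1 : Matrix (Fin (k₁ + k₂)) (Fin (k₁ + k₂)) ℝ)) (Set.Ioi t) := by
  intro t
  change _ ≤ Measure.map (waldRV (signatureForm k₁ k₂) 1) _ _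
  obtain ⟨m, rfl⟩ := Nat.exists_eq_add_of_le' hk₁
  obtain ⟨n, rfl⟩ := Nat.exists_eq_add_of_le' hk₂
  obtain ⟨c, hlaw⟩ := exists_map_waldRV_signatureForm_apply m n
  set S := {v : ℝ | t < 1 / 4 * v ^ 2} with hS_def
  have hS : MeasurableSet S := measurableSet_lt (by fun_prop) (by fun_prop)
  have hS_neg : -S = S := by ext v; simp [S]
  have hS_abs : ∀ v ∈ S, ∀ v' ∉ S, |v'| ≤ |v| := fun v hv v' hv' => sq_le_sq.1 <| by
    rw [hS_def, Set.mem_ofPred_eq] at hv hv'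
    linarith
  have hcorr := measure_mul_lintegral_halfAngleWeight_le m n (gaussianReal 0 1)
    (gaussianReal 0 1) hS hS_neg hS_abs
  have hmass := hlaw Set.univ MeasurableSet.univ
  rw [Set.preimage_univ, Measure.restrict_univ, Measure.map_apply (measurable_waldRV _ _)
    MeasurableSet.univ, Set.preimage_univ, measure_univ] at hmass
  calc (chiSq 1).map (fun y => 1 / 4 * y) (Set.Ioi t)
      = gaussianReal 0 1 S := by
        rw [chiSq_one, Measure.map_map (by fun_prop) (by fun_prop),
          Measure.map_apply (by fun_prop) measurableSet_Ioi]
        rfl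
    _ = c * (gaussianReal 0 1 S * _) := by rw [mul_left_comm, ← hmass, mul_one]
    _ ≤ c * _ := mul_le_mul_right hcorr c
    _ = _ := by rw [hlaw _ measurableSet_Ioi, Set.prod_univ]; rfl
end
end

section
/- Suppose R² ~ χ²₄ and U ~ Uniform[0,1] are independent. Then (1/4)·R²·U² is stochastically dominated by χ²₁, i.e., (1/4)·R²·U² ≤_st χ²₁. -/
open MeasureTheory ProbabilityTheory Matrix MvPolynomial Real

noncomputable section

/-!
Integrating out the uniform variable gives `P(R²U²/4 > s²) = E[(1 - s/W)⁺]` with `W = R/2`. Since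
`E[exp (W²)] = 4` for `R² ~ χ²₄`, every pointwise bound `1 - s/w ≤ a + b exp (w²)` with `a, b ≥ 0`
yields `P(R²U²/4 > s²) ≤ a + 4b`. Start from `1 - 1/w ≤ exp (w²)/20`. For `s ≤ 1`, the identity
`1 - s/w = (1 - s) + s (1 - 1/w)` turns it into the upper bound `1 - 4s/5`; for `s ≥ 1`,
substituting `w/s` for `w` gives the upper bound `exp (1 - s²)/5`. These lie below the Gaussian tail
estimates `P(|Z| > s) ≥ 1 - s √(2/π)` and `P(|Z| > s) ≥ √(e/(2π)) exp (-s²)`, respectively.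
-/

section RealInequalities

lemma one_sub_inv_le_exp_sq_div {w : ℝ} (hw : 0 < w) : 1 - 1 / w ≤ rexp (w ^ 2) / 20 := by
  have exp_lower : 5 * (4 / 5) ^ 5 * w ^ 4 ≤ rexp (w ^ 2) :=
    calc 5 * (4 / 5) ^ 5 * w ^ 4 ≤ (2.7 * (w ^ 2 / 2)) ^ 2 := by
          nlinarith [pow_pos hw 4]
      _ ≤ (rexp 1 * (w ^ 2 / 2)) ^ 2 := by
          gcongr
          linarith [exp_one_gt_d9]
      _ ≤ rexp (w ^ 2 / 2) ^ 2 := by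
          gcongr
          exact exp_one_mul_le_exp
      _ = rexp (w ^ 2) := by
          rw [← exp_nat_mul]
          congr 1
          push_cast
          ring
  -- `w ^ 5 / (w - 1)` is minimal at `w = 5 / 4`, where Bernoulli's inequality is an equality.
  have bernoulli : 1 + (5 : ℕ) * (4 / 5 * w - 1) ≤ (4 / 5 * w) ^ 5 :=
    one_add_mul_sub_le_pow (by linarith) 5
  have mul_exp_lower : 5 * (4 / 5) ^ 5 * w ^ 4 * w ≤ rexp (w ^ 2) * w := by gcongr
  rw [one_sub_div hw.ne', div_le_div_iff₀ hw (by norm_num)]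
  push_cast at bernoulli
  linarith

lemma one_sub_div_le_one_sub_add_exp_sq {s w : ℝ} (hs : 0 ≤ s) (hw : 0 < w) :
    1 - s / w ≤ 1 - s + s / 20 * rexp (w ^ 2) := by
  have := mul_le_mul_of_nonneg_left (one_sub_inv_le_exp_sq_div hw) hs
  rw [mul_sub, mul_one_div] at this
  linarith

lemma div_sq_le_one_sub_sq_add_sq {s w : ℝ} (hs : 1 ≤ s) (hsw : s ≤ w) :
    (w / s) ^ 2 ≤ 1 - s ^ 2 + w ^ 2 := by
  have hs_sq : 1 ≤ s ^ 2 := one_le_pow₀ hs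
  have hsw_sq : s ^ 2 ≤ w ^ 2 := by gcongr
  rw [div_pow, div_le_iff₀ (by positivity)]
  linarith [mul_nonneg (sub_nonneg.2 hs_sq) (sub_nonneg.2 hsw_sq)]

lemma one_sub_div_le_exp_one_sub_sq_mul_exp_sq {s w : ℝ} (hs : 1 ≤ s) (hw : 0 < w) :
    1 - s / w ≤ rexp (1 - s ^ 2) / 20 * rexp (w ^ 2) := by
  rcases le_total w s with hws | hsw
  · have : 1 ≤ s / w := (one_le_div hw).2 hws
    exact (sub_nonpos.2 this).trans (by positivity)
  · have hs0 : 0 < s := one_pos.trans_le hs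
    calc 1 - s / w = 1 - 1 / (w / s) := by rw [one_div_div]
      _ ≤ rexp ((w / s) ^ 2) / 20 := one_sub_inv_le_exp_sq_div (div_pos hw hs0)
      _ ≤ rexp (1 - s ^ 2 + w ^ 2) / 20 := by
          gcongr
          exact div_sq_le_one_sub_sq_add_sq hs hsw
      _ = rexp (1 - s ^ 2) / 20 * rexp (w ^ 2) := by rw [Real.exp_add]; ring

end RealInequalities

section Gaussian

variable {v : NNReal}

lemma gaussianPDFReal_le_inv_sqrt (μ : ℝ) (v : NNReal) (x : ℝ) :
    gaussianPDFReal μ v x ≤ (√(2 * π * v))⁻¹ := by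
  refine mul_le_of_le_one_right (by positivity) (exp_le_one_iff.2 ?_)
  exact div_nonpos_of_nonpos_of_nonneg (neg_nonpos.2 (sq_nonneg _)) (by positivity)

lemma gaussianReal_le_mul_volume (μ : ℝ) (hv : v ≠ 0) (A : Set ℝ) :
    gaussianReal μ v A ≤ ENNReal.ofReal (√(2 * π * v))⁻¹ * volume A := by
  rw [gaussianReal_apply μ hv, ← setLIntegral_const]
  exact lintegral_mono fun x => ENNReal.ofReal_le_ofReal (gaussianPDFReal_le_inv_sqrt μ v x)

lemma one_sub_le_gaussianReal_lt_abs (μ : ℝ) (hv : v ≠ 0) {s : ℝ} (hs : 0 ≤ s) :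
    ENNReal.ofReal (1 - 2 * s / √(2 * π * v)) ≤ gaussianReal μ v {x | s < |x|} := by
  have compl_Icc : {x : ℝ | s < |x|} = (Set.Icc (-s) s)ᶜ := by
    ext x
    simp only [Set.mem_ofPred_eq, Set.mem_compl_iff, Set.mem_Icc, ← abs_le, not_le]
  rw [compl_Icc, prob_compl_eq_one_sub measurableSet_Icc, ENNReal.ofReal_sub _ (by positivity),
    ENNReal.ofReal_one]
  gcongr
  calc gaussianReal μ v (Set.Icc (-s) s)
      ≤ ENNReal.ofReal (√(2 * π * v))⁻¹ * volume (Set.Icc (-s) s) :=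
        gaussianReal_le_mul_volume μ hv _
    _ = ENNReal.ofReal (2 * s / √(2 * π * v)) := by
        rw [Real.volume_Icc, ← ENNReal.ofReal_mul (by positivity)]
        congr 1
        ring

lemma gaussianReal_lt_abs_eq_two_mul (v : NNReal) {s : ℝ} (hs : 0 ≤ s) :
    gaussianReal 0 v {x | s < |x|} = 2 * gaussianReal 0 v (Set.Ioi s) := by
  have symm : gaussianReal 0 v (Set.Iio (-s)) = gaussianReal 0 v (Set.Ioi s) := by
    conv_rhs => rw [← neg_zero, ← gaussianReal_map_neg,
      Measure.map_apply measurable_neg measurableSet_Ioi]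
    rw [Set.neg_preimage, Set.neg_Ioi]
  have union : {x : ℝ | s < |x|} = Set.Ioi s ∪ Set.Iio (-s) := by
    ext x
    simp only [Set.mem_ofPred_eq, Set.mem_union, Set.mem_Ioi, Set.mem_Iio, lt_abs, lt_neg]
  have disjoint : Disjoint (Set.Ioi s) (Set.Iio (-s)) :=
    Set.disjoint_left.2 fun x hx hx' => by
      linarith [Set.mem_Ioi.1 hx, Set.mem_Iio.1 hx']
  rw [union, measure_union disjoint measurableSet_Iio, symm, two_mul]

lemma integral_Ioi_mul_exp_neg_mul_sq {b : ℝ} (hb : 0 < b) (s : ℝ) :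
    ∫ x in Set.Ioi s, x * rexp (-b * x ^ 2) = rexp (-b * s ^ 2) / (2 * b) := by
  have deriv (x : ℝ) :
      HasDerivAt (fun x => -(rexp (-b * x ^ 2) / (2 * b))) (x * rexp (-b * x ^ 2)) x := by
    convert! ((((hasDerivAt_id x).pow 2).const_mul (-b)).exp.div_const (2 * b)).neg using 1
    simp only [id, Nat.cast_ofNat]
    field_simp
    simp [mul_comm]
  have vanishes : Filter.Tendsto (fun x => -(rexp (-b * x ^ 2) / (2 * b))) Filter.atTop
      (nhds (-(0 / (2 * b)))) :=
    ((tendsto_exp_atBot.comp ((Filter.tendsto_pow_atTop two_ne_zero).const_mul_atTop_of_neg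
      (neg_neg_of_pos hb))).div_const _).neg
  rw [integral_Ioi_of_hasDerivAt_of_tendsto' (fun x _ => deriv x)
    (integrable_mul_exp_neg_mul_sq hb).integrableOn vanishes]
  ring

lemma mul_sqrt_exp_one_div_le_exp_sq_div (v : NNReal) (x : ℝ) :
    x * √(rexp 1 / v) ≤ rexp (x ^ 2 / (2 * v)) := by
  refine le_of_sq_le_sq ?_ (by positivity)
  calc (x * √(rexp 1 / v)) ^ 2 = rexp 1 * (x ^ 2 / v) := by
        rw [mul_pow, sq_sqrt (by positivity)]
        ring
    _ ≤ rexp (x ^ 2 / v) := exp_one_mul_le_exp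
    _ = rexp (x ^ 2 / (2 * v)) ^ 2 := by
        rw [← exp_nat_mul]
        congr 1
        push_cast
        ring

lemma mul_exp_le_gaussianPDFReal (v : NNReal) (x : ℝ) :
    (√(2 * π * v))⁻¹ * √(rexp 1 / v) * (x * rexp (-(v : ℝ)⁻¹ * x ^ 2)) ≤
      gaussianPDFReal 0 v x :=
  calc (√(2 * π * v))⁻¹ * √(rexp 1 / v) * (x * rexp (-(v : ℝ)⁻¹ * x ^ 2))
      = (√(2 * π * v))⁻¹ * (x * √(rexp 1 / v) * rexp (-(v : ℝ)⁻¹ * x ^ 2)) := by ring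
    _ ≤ (√(2 * π * v))⁻¹ * (rexp (x ^ 2 / (2 * v)) * rexp (-(v : ℝ)⁻¹ * x ^ 2)) := by
        gcongr
        exact mul_sqrt_exp_one_div_le_exp_sq_div v x
    _ = gaussianPDFReal 0 v x := by
        rw [← Real.exp_add, gaussianPDFReal]
        ring_nf

lemma exp_neg_sq_div_le_gaussianReal_Ioi (hv : v ≠ 0) (s : ℝ) :
    ENNReal.ofReal (√(rexp 1 / (8 * π)) * rexp (-s ^ 2 / v)) ≤
      gaussianReal 0 v (Set.Ioi s) := by
  have hv_pos : 0 < (v : ℝ) := NNReal.coe_pos.2 (pos_iff_ne_zero.2 hv)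
  have const_eq : (√(2 * π * v))⁻¹ * √(rexp 1 / v) * (v / 2) = √(rexp 1 / (8 * π)) := by
    rw [← sqrt_inv, ← sqrt_mul (by positivity), ← sqrt_sq (by positivity : 0 ≤ (v : ℝ) / 2),
      ← sqrt_mul (by positivity)]
    congr 1
    field_simp
    norm_num
  rw [gaussianReal_apply_eq_integral _ hv]
  apply ENNReal.ofReal_le_ofReal
  calc √(rexp 1 / (8 * π)) * rexp (-s ^ 2 / v)
      = ∫ x in Set.Ioi s,
          (√(2 * π * v))⁻¹ * √(rexp 1 / v) * (x * rexp (-(v : ℝ)⁻¹ * x ^ 2)) := by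
        rw [integral_const_mul, integral_Ioi_mul_exp_neg_mul_sq (inv_pos.2 hv_pos), ← const_eq]
        field_simp
    _ ≤ ∫ x in Set.Ioi s, gaussianPDFReal 0 v x :=
        setIntegral_mono
          ((integrable_mul_exp_neg_mul_sq (inv_pos.2 hv_pos)).const_mul _).integrableOn
          (integrable_gaussianPDFReal _ _).integrableOn (mul_exp_le_gaussianPDFReal v)

-- For `2 * θ * v ≥ 1` the moment diverges and both sides take the junk value `0`.
lemma mgf_sq_gaussianReal (v : NNReal) (θ : ℝ) :
    mgf (fun x => x ^ 2) (gaussianReal 0 v) θ = (√(1 - 2 * θ * v))⁻¹ := by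
  rcases eq_or_ne v 0 with rfl | hv
  · simp [mgf, gaussianReal_zero_var]
  have integrand (x : ℝ) : gaussianPDFReal 0 v x • rexp (θ * x ^ 2) =
      (√(2 * π * v))⁻¹ * rexp (-((1 - 2 * θ * v) / (2 * v)) * x ^ 2) := by
    rw [gaussianPDFReal, smul_eq_mul, mul_assoc, ← Real.exp_add]
    congr 2
    field_simp
    ring
  rw [mgf, integral_gaussianReal_eq_integral_smul hv]
  simp_rw [integrand]
  rw [integral_const_mul, integral_gaussian, ← sqrt_inv, ← sqrt_mul (by positivity), ← sqrt_inv]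
  congr 1
  field_simp

end Gaussian

section ChiSquare

instance isProbabilityMeasure_stdGaussian (ι : Type*) [Fintype ι] :
    IsProbabilityMeasure (_root_.stdGaussian ι) := by
  unfold _root_.stdGaussian
  infer_instance

instance isProbabilityMeasure_chiSq (k : ℕ) : IsProbabilityMeasure (chiSq k) :=
  Measure.isProbabilityMeasure_map (by fun_prop : Measurable _).aemeasurable

lemma chiSq_Ioi_of_neg (k : ℕ) {t : ℝ} (ht : t < 0) : chiSq k (Set.Ioi t) = 1 := by
  have preimage_eq_univ : (fun z : Fin k → ℝ => ∑ i, (z i) ^ 2) ⁻¹' Set.Ioi t = Set.univ :=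
    Set.eq_univ_of_forall fun z => ht.trans_le (Finset.sum_nonneg fun i _ => sq_nonneg (z i))
  rw [chiSq, Measure.map_apply (by fun_prop) measurableSet_Ioi, preimage_eq_univ, measure_univ]

lemma chiSq_one_eq_map_gaussianReal : chiSq 1 = (gaussianReal 0 1).map fun x => x ^ 2 := by
  rw [← (measurePreserving_eval (fun _ : Fin 1 => gaussianReal 0 1) 0).map_eq,
    Measure.map_map (by fun_prop) (by fun_prop), chiSq, _root_.stdGaussian]
  congr 1
  ext z
  simp

lemma chiSq_one_Ioi_sq {s : ℝ} (hs : 0 ≤ s) :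
    chiSq 1 (Set.Ioi (s ^ 2)) = gaussianReal 0 1 {x | s < |x|} := by
  rw [chiSq_one_eq_map_gaussianReal, Measure.map_apply (by fun_prop) measurableSet_Ioi]
  congr 1
  ext x
  simp only [Set.mem_preimage, Set.mem_Ioi, Set.mem_ofPred_eq, sq_lt_sq, abs_of_nonneg hs]

lemma mgf_chiSq (k : ℕ) (θ : ℝ) :
    mgf id (chiSq k) θ = (√(1 - 2 * θ))⁻¹ ^ k := by
  have exp_sum (z : Fin k → ℝ) : rexp (θ * ∑ i, (z i) ^ 2) = ∏ i, rexp (θ * (z i) ^ 2) := by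
    rw [← Real.exp_sum, Finset.mul_sum]
  have mgf_sq : ∫ x, rexp (θ * x ^ 2) ∂(gaussianReal 0 1) = (√(1 - 2 * θ))⁻¹ := by
    simpa [mgf] using mgf_sq_gaussianReal (1 : NNReal) θ
  rw [chiSq, mgf_id_map (by fun_prop : Measurable _).aemeasurable, mgf, _root_.stdGaussian]
  simp_rw [exp_sum]
  rw [integral_fintype_prod_eq_pow (fun x : ℝ => rexp (θ * x ^ 2)), mgf_sq, Fintype.card_fin]

lemma integrable_exp_mul_chiSq (k : ℕ) {θ : ℝ} (hθ : 2 * θ < 1) :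
    Integrable (fun r => rexp (θ * r)) (chiSq k) := by
  refine mgf_pos_iff (X := id).1 ?_
  rw [mgf_chiSq k θ]
  have : 0 < 1 - 2 * θ := sub_pos.2 hθ
  positivity

lemma mgf_chiSq_four_quarter : mgf id (chiSq 4) (1 / 4) = 4 := by
  rw [mgf_chiSq, inv_pow, show 4 = 2 * 2 from rfl, pow_mul,
    sq_sqrt (by norm_num)]
  norm_num

end ChiSquare

section UniformScaling

/-- The law of `c X U²`, where `X` has law `ν` and `U` is uniform on `[0, 1]` and independent of
`X`. -/
def mulUniformSq (c : ℝ) (ν : Measure ℝ) : Measure ℝ :=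
  (ν.prod (volume.restrict (Set.Icc (0 : ℝ) 1))).map fun p => c * p.1 * p.2 ^ 2

instance isProbabilityMeasure_restrict_Icc_zero_one :
    IsProbabilityMeasure (volume.restrict (Set.Icc (0 : ℝ) 1)) :=
  ⟨by simp⟩

instance isProbabilityMeasure_mulUniformSq (c : ℝ) (ν : Measure ℝ) [IsProbabilityMeasure ν] :
    IsProbabilityMeasure (mulUniformSq c ν) :=
  Measure.isProbabilityMeasure_map (by fun_prop)

variable {a b c s : ℝ} {ν : Measure ℝ}

lemma volume_restrict_Icc_sq_lt_mul_sq (ha : 0 < a) (hs : 0 ≤ s) :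
    volume.restrict (Set.Icc (0 : ℝ) 1) {u | s ^ 2 < a * u ^ 2} =
      ENNReal.ofReal (1 - s / √a) := by
  have inter_eq_Ioc : {u | s ^ 2 < a * u ^ 2} ∩ Set.Icc 0 1 = Set.Ioc (s / √a) 1 := by
    have sq_lt_iff {u : ℝ} (hu : 0 ≤ u) : s ^ 2 < a * u ^ 2 ↔ s / √a < u := by
      rw [← sq_sqrt ha.le, ← mul_pow, sq_lt_sq₀ hs (by positivity), sqrt_sq (by positivity),
        div_lt_iff₀' (by positivity)]
    ext u
    constructor
    · rintro ⟨hu, hu0, hu1⟩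
      exact ⟨(sq_lt_iff hu0).1 hu, hu1⟩
    · rintro ⟨hu, hu1⟩
      have hu0 : 0 ≤ u := (div_nonneg hs (sqrt_nonneg a)).trans hu.le
      exact ⟨(sq_lt_iff hu0).2 hu, hu0, hu1⟩
  rw [Measure.restrict_apply' measurableSet_Icc, inter_eq_Ioc, Real.volume_Ioc]

lemma mulUniformSq_Ioi_sq (ν : Measure ℝ) (hc : 0 < c) (hs : 0 ≤ s) :
    mulUniformSq c ν (Set.Ioi (s ^ 2)) =
      ∫⁻ r in Set.Ioi 0, ENNReal.ofReal (1 - s / √(c * r)) ∂ν := by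
  rw [mulUniformSq, Measure.map_apply (by fun_prop) measurableSet_Ioi,
    Measure.prod_apply (measurableSet_Ioi.preimage (by fun_prop)),
    ← lintegral_indicator measurableSet_Ioi]
  refine lintegral_congr fun r => ?_
  rcases lt_or_ge 0 r with hr | hr
  · rw [Set.indicator_of_mem (Set.mem_Ioi.2 hr)]
    exact volume_restrict_Icc_sq_lt_mul_sq (mul_pos hc hr) hs
  · rw [Set.indicator_of_notMem (Set.notMem_Ioi.2 hr)]
    refine measure_mono_null (fun u hu => ?_) measure_empty
    have : c * r * u ^ 2 ≤ 0 :=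
      mul_nonpos_of_nonpos_of_nonneg (mul_nonpos_of_nonneg_of_nonpos hc.le hr) (sq_nonneg u)
    exact absurd hu (this.trans (sq_nonneg s)).not_gt

lemma setLIntegral_ofReal_le_add_mul_integral {Ω : Type*} [MeasurableSpace Ω] {μ : Measure Ω}
    [IsProbabilityMeasure μ] {S : Set Ω} (hS : MeasurableSet S) {f g : Ω → ℝ}
    (hg : Integrable g μ) (hg0 : 0 ≤ g) (ha : 0 ≤ a) (hb : 0 ≤ b)
    (hfg : ∀ ω ∈ S, f ω ≤ a + b * g ω) :
    ∫⁻ ω in S, ENNReal.ofReal (f ω) ∂μ ≤ ENNReal.ofReal (a + b * ∫ ω, g ω ∂μ) :=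
  calc ∫⁻ ω in S, ENNReal.ofReal (f ω) ∂μ
      ≤ ∫⁻ ω in S, ENNReal.ofReal (a + b * g ω) ∂μ :=
        setLIntegral_mono' hS fun ω hω => ENNReal.ofReal_le_ofReal (hfg ω hω)
    _ ≤ ∫⁻ ω, ENNReal.ofReal (a + b * g ω) ∂μ := setLIntegral_le_lintegral _ _
    _ = ENNReal.ofReal (∫ ω, (a + b * g ω) ∂μ) :=
        (ofReal_integral_eq_lintegral_ofReal ((integrable_const a).add (hg.const_mul b))
          (ae_of_all _ fun ω => add_nonneg ha (mul_nonneg hb (hg0 ω)))).symm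
    _ = ENNReal.ofReal (a + b * ∫ ω, g ω ∂μ) := by
        rw [integral_add (integrable_const a) (hg.const_mul b), integral_const_mul,
          integral_const, probReal_univ, one_smul]

lemma mulUniformSq_Ioi_sq_le [IsProbabilityMeasure ν] (hc : 0 < c)
    (hν : Integrable (fun r => rexp (c * r)) ν) (hs : 0 ≤ s) (ha : 0 ≤ a) (hb : 0 ≤ b)
    (h : ∀ w, 0 < w → 1 - s / w ≤ a + b * rexp (w ^ 2)) :
    mulUniformSq c ν (Set.Ioi (s ^ 2)) ≤ ENNReal.ofReal (a + b * mgf id ν c) := by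
  rw [mulUniformSq_Ioi_sq ν hc hs]
  refine setLIntegral_ofReal_le_add_mul_integral measurableSet_Ioi hν
    (fun r => (exp_pos _).le) ha hb fun r hr => ?_
  have hcr : 0 < c * r := mul_pos hc hr
  simpa only [id, sq_sqrt hcr.le] using h (√(c * r)) (sqrt_pos.2 hcr)

end UniformScaling

section Comparison

variable {s : ℝ}

lemma mulUniformSq_chiSq_four_Ioi_sq_le {a b : ℝ} (hs : 0 ≤ s) (ha : 0 ≤ a) (hb : 0 ≤ b)
    (h : ∀ w, 0 < w → 1 - s / w ≤ a + b * rexp (w ^ 2)) :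
    mulUniformSq (1 / 4) (chiSq 4) (Set.Ioi (s ^ 2)) ≤ ENNReal.ofReal (a + b * 4) := by
  simpa only [mgf_chiSq_four_quarter] using mulUniformSq_Ioi_sq_le (c := 1 / 4) (by norm_num)
    (integrable_exp_mul_chiSq 4 (by norm_num)) hs ha hb h

lemma mulUniformSq_chiSq_four_Ioi_sq_le_of_le_one (hs : 0 ≤ s) (hs1 : s ≤ 1) :
    mulUniformSq (1 / 4) (chiSq 4) (Set.Ioi (s ^ 2)) ≤ ENNReal.ofReal (1 - 4 / 5 * s) := by
  convert mulUniformSq_chiSq_four_Ioi_sq_le hs (sub_nonneg.2 hs1) (by positivity)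
    (fun w hw => one_sub_div_le_one_sub_add_exp_sq hs hw) using 2
  ring

lemma mulUniformSq_chiSq_four_Ioi_sq_le_of_one_le (hs : 1 ≤ s) :
    mulUniformSq (1 / 4) (chiSq 4) (Set.Ioi (s ^ 2)) ≤
      ENNReal.ofReal (rexp 1 / 5 * rexp (-s ^ 2)) := by
  convert mulUniformSq_chiSq_four_Ioi_sq_le (zero_le_one.trans hs) le_rfl (by positivity)
    (fun w hw => (one_sub_div_le_exp_one_sub_sq_mul_exp_sq hs hw).trans_eq (zero_add _).symm)
    using 2
  rw [sub_eq_add_neg, Real.exp_add]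
  ring

lemma one_sub_four_fifths_mul_le_gaussianReal_lt_abs (hs : 0 ≤ s) :
    ENNReal.ofReal (1 - 4 / 5 * s) ≤ gaussianReal 0 1 {x | s < |x|} := by
  have sqrt_lower : 5 / 2 ≤ √(2 * π * (1 : NNReal)) := by
    refine le_sqrt_of_sq_le ?_
    push_cast
    linarith [pi_gt_d2]
  refine le_trans (ENNReal.ofReal_le_ofReal ?_) (one_sub_le_gaussianReal_lt_abs 0 one_ne_zero hs)
  calc 1 - 4 / 5 * s = 1 - 2 * s / (5 / 2) := by ring
    _ ≤ 1 - 2 * s / √(2 * π * (1 : NNReal)) := by gcongr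

lemma exp_one_div_five_mul_exp_neg_sq_le_gaussianReal_lt_abs (hs : 0 ≤ s) :
    ENNReal.ofReal (rexp 1 / 5 * rexp (-s ^ 2)) ≤ gaussianReal 0 1 {x | s < |x|} := by
  have const_le : rexp 1 / 5 ≤ 2 * √(rexp 1 / (8 * π)) := by
    have : rexp 1 / 10 ≤ √(rexp 1 / (8 * π)) := by
      refine le_sqrt_of_sq_le ?_
      rw [le_div_iff₀ (by positivity)]
      have : rexp 1 * π ≤ 2.72 * 3.15 := by
        gcongr
        · linarith [exp_one_lt_d9]
        · exact pi_lt_d2.le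
      nlinarith [exp_pos 1]
    linarith
  calc ENNReal.ofReal (rexp 1 / 5 * rexp (-s ^ 2))
      ≤ ENNReal.ofReal (2 * (√(rexp 1 / (8 * π)) * rexp (-s ^ 2))) := by
        rw [← mul_assoc]
        gcongr
    _ = 2 * ENNReal.ofReal (√(rexp 1 / (8 * π)) * rexp (-s ^ 2)) := by
        rw [ENNReal.ofReal_mul zero_le_two, ENNReal.ofReal_ofNat]
    _ ≤ 2 * gaussianReal 0 1 (Set.Ioi s) := by
        gcongr
        simpa using exp_neg_sq_div_le_gaussianReal_Ioi (v := 1) one_ne_zero s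
    _ = gaussianReal 0 1 {x | s < |x|} := (gaussianReal_lt_abs_eq_two_mul 1 hs).symm

end Comparison

/-- If `R² ~ χ²₄` and `U ~ Uniform[0,1]` are independent, then
`(1/4)·R²·U² ≤_st χ²₁`. -/
theorem quarter_R2U2_le_chiSq_one :
    ∀ t : ℝ, ((chiSq 4).prod (volume.restrict (Set.Icc (0 : ℝ) 1))).map
        (fun p => 1 / 4 * p.1 * p.2 ^ 2) (Set.Ioi t) ≤
      chiSq 1 (Set.Ioi t) := by
  intro t
  change mulUniformSq (1 / 4) (chiSq 4) (Set.Ioi t) ≤ chiSq 1 (Set.Ioi t)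
  rcases lt_or_ge t 0 with ht | ht
  · rw [chiSq_Ioi_of_neg 1 ht]
    exact prob_le_one
  obtain ⟨s, hs, rfl⟩ : ∃ s, 0 ≤ s ∧ s ^ 2 = t := ⟨√t, sqrt_nonneg t, sq_sqrt ht⟩
  rw [chiSq_one_Ioi_sq hs]
  rcases le_total s 1 with hs1 | hs1
  · exact (mulUniformSq_chiSq_four_Ioi_sq_le_of_le_one hs hs1).trans
      (one_sub_four_fifths_mul_le_gaussianReal_lt_abs hs)
  · exact (mulUniformSq_chiSq_four_Ioi_sq_le_of_one_le hs1).trans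
      (exp_one_div_five_mul_exp_neg_sq_le_gaussianReal_lt_abs hs)
end
end
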